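/- Let N ≥ 1, c ≠ 0, c₀, C ∈ ℝ, ω ≠ 0, and let m, n be positive integers with k = m/n. Let L be a smooth function on the extended phase space ℝ^{2N+2} depending on (q,p) only with 2(cL + c₀) > 0 everywhere, and set M = k·√(2(cL + c₀)). Let γ be a smooth nonvanishing solution of γ' + cγ² + C = 0 on an open interval I. Suppose G^+ and G^− are smooth complex-valued functions depending on (q,p) only that satisfy X_L G^± = ±(i/k)·M·G^± (i.e. X_L G^± = ±√(−2(cL+c₀))·G^±). Define H = (1/2)p_u² + (1/2)(γ² + C/c)·M² + ω²/(2γ²) − (C/c)·k²c₀, A^± = ∓(i/√2)·p_u + ω/(√2·γ) − (M/√2)·γ, D^± = ∓(i/γ)·p_u + ω/γ² − H/ω − (C/(cω))·(c₀k² − M²/2), and X^± = (G^±)^{2n}·(A^∓)^{2m}·(D^±)^m. Then {H, X^+} = 0 and {H, X^−} = 0 at every point with u ∈ I. -/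

import Mathlib

/-!
Extended phase space ℝ^{2N+2} with coordinates (u, q, p_u, p); the canonical
Poisson bracket (sign convention {q^i, p_i} = -1) is extended ℂ-bilinearly to
smooth complex-valued functions, and X_L F = {L, F}.
-/

noncomputable section

/-- The extended phase space: a point is `(u, q, p_u, p)`. -/
abbrev PS (N : ℕ) : Type := ℝ × (Fin N → ℝ) × ℝ × (Fin N → ℝ)

/-- Partial derivative with respect to `u` (complex-valued functions). -/
def pdu {N : ℕ} (F : PS N → ℂ) (x : PS N) : ℂ :=
  deriv (fun t => F (t, x.2.1, x.2.2.1, x.2.2.2)) x.1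

/-- Partial derivative with respect to `p_u`. -/
def pdpu {N : ℕ} (F : PS N → ℂ) (x : PS N) : ℂ :=
  deriv (fun t => F (x.1, x.2.1, t, x.2.2.2)) x.2.2.1

/-- Partial derivative with respect to `q^i`. -/
def pdq {N : ℕ} (i : Fin N) (F : PS N → ℂ) (x : PS N) : ℂ :=
  deriv (fun t => F (x.1, Function.update x.2.1 i t, x.2.2.1, x.2.2.2)) (x.2.1 i)

/-- Partial derivative with respect to `p_i`. -/
def pdp {N : ℕ} (i : Fin N) (F : PS N → ℂ) (x : PS N) : ℂ :=
  deriv (fun t => F (x.1, x.2.1, x.2.2.1, Function.update x.2.2.2 i t)) (x.2.2.2 i)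

/-- The canonical Poisson bracket (sign convention `{q^i, p_i} = -1`), extended
ℂ-bilinearly to complex-valued functions. -/
def pbracket {N : ℕ} (F H : PS N → ℂ) (x : PS N) : ℂ :=
  (pdpu F x * pdu H x - pdu F x * pdpu H x)
    + ∑ i : Fin N, (pdp i F x * pdq i H x - pdq i F x * pdp i H x)

/-- The Hamiltonian vector field of `L` applied to `F`: `X_L F = {L, F}`. -/
def XL {N : ℕ} (L : PS N → ℂ) (F : PS N → ℂ) : PS N → ℂ :=
  fun x => pbracket L F x

/-!
Fix `s` with `s² = -1` and put `B_σ = ω/γ + s p_u + σγM` for `σ = ±1`, and `B̄_σ` for the same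
function with `-s` in place of `s`. Expanding squares gives `A = B₋/√2` and
`D = B̄₋ B̄₊/(2ω)`, where `A` and `D` are the factors that belong to `s` (`A^-`, `D^+` for `s = i`,
and `A^+`, `D^-` for `s = -i`). Each of the three kinds of factors of `X` is an eigenfunction of
the derivation `{H, ·}`, with a function as eigenvalue:

* `{H, B_σ} = sγ'(ω/γ² - σM) B_σ`, because `M` Poisson commutes with `u`, `p_u` and itself;
* `{H, B̄_σ} = -sγ'(ω/γ² - σM) B̄_σ`;
* `{H, G} = (γ² + C/c) M {M, G} = -skγ'M G`, because `M² = 2k²(cL + c₀)` turns the hypothesis on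
  `{L, G}` into `{M, G} = skc G`, and `γ' = -(cγ² + C)`.

Eigenvalues add along products, and the exponents `2n, 2m, m, m` of `G, B₋, B̄₋, B̄₊` make the sum
`2sγ'M(m - nk)`, which vanishes as `k = m/n`.
-/

section PoissonForm

variable {N : ℕ}

/-- The Poisson bivector as a ℂ-bilinear form on complex covectors, so that
`{F, G}(x) = poissonForm (dF x) (dG x)`. -/
def poissonForm : (PS N →L[ℝ] ℂ) →ₗ[ℂ] (PS N →L[ℝ] ℂ) →ₗ[ℂ] ℂ :=
  LinearMap.mk₂ ℂ
    (fun α β => (α (0, 0, 1, 0) * β (1, 0, 0, 0) - α (1, 0, 0, 0) * β (0, 0, 1, 0))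
      + ∑ i : Fin N, (α (0, 0, 0, Pi.single i 1) * β (0, Pi.single i 1, 0, 0)
        - α (0, Pi.single i 1, 0, 0) * β (0, 0, 0, Pi.single i 1)))
    (fun α α' β => by
      simp only [add_apply, add_mul, add_sub_add_comm, Finset.sum_add_distrib]; ring)
    (fun a α β => by
      simp only [smul_apply, smul_eq_mul, mul_assoc, ← mul_sub, ← Finset.mul_sum, ← mul_add])
    (fun α β β' => by
      simp only [add_apply, mul_add, add_sub_add_comm, Finset.sum_add_distrib]; ring)
    (fun a α β => by
      simp only [smul_apply, smul_eq_mul, mul_left_comm _ a, ← mul_sub,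
        ← Finset.mul_sum, ← mul_add])

theorem poissonForm_self (α : PS N →L[ℝ] ℂ) : poissonForm α α = 0 := by
  simp [poissonForm, mul_comm]

/-- The differential of the coordinate `u`, as a complex covector. -/
def coordDu : PS N →L[ℝ] ℂ := Complex.ofRealCLM.comp (.fst ..)

/-- The differential of the coordinate `p_u`, as a complex covector. -/
def coordDpu : PS N →L[ℝ] ℂ :=
  Complex.ofRealCLM.comp ((ContinuousLinearMap.fst ..).comp ((ContinuousLinearMap.snd ..).comp
    (.snd ..)))

/-- A covector is horizontal for the projection `(u, q, p_u, p) ↦ (q, p)` when it vanishes on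
the vectors tangent to the fibres, as do the differentials of functions of `(q, p)` only. -/
def IsHorizontal (α : PS N →L[ℝ] ℂ) : Prop :=
  ∀ a b : ℝ, α (a, 0, b, 0) = 0

theorem IsHorizontal.smul {α : PS N →L[ℝ] ℂ} (hα : IsHorizontal α) (a : ℂ) :
    IsHorizontal (a • α) := fun s t => by
  rw [smul_apply, hα, smul_zero]

theorem poissonForm_add_horizontal (a b a' b' : ℂ) {α α' : PS N →L[ℝ] ℂ}
    (hα : IsHorizontal α) (hα' : IsHorizontal α') :
    poissonForm (a • coordDu + b • coordDpu + α) (a' • coordDu + b' • coordDpu + α')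
      = b * a' - a * b' + poissonForm α α' := by
  simp only [poissonForm, LinearMap.mk₂_apply, coordDu, coordDpu, add_apply, smul_apply,
    ContinuousLinearMap.comp_apply, ContinuousLinearMap.coe_fst', ContinuousLinearMap.coe_snd',
    Complex.ofRealCLM_apply, Complex.ofReal_zero, Complex.ofReal_one, hα _ _, hα' _ _, smul_eq_mul,
    mul_zero, mul_one, zero_add, add_zero]
  ring

theorem poissonForm_add_horizontal_left (a b : ℂ) {α β : PS N →L[ℝ] ℂ} (hα : IsHorizontal α)
    (hβ : IsHorizontal β) :
    poissonForm (a • coordDu + b • coordDpu + α) β = poissonForm α β := by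
  simp [poissonForm, coordDu, coordDpu, hα _ _, hβ _ _]

theorem isHorizontal_of_hasFDerivAt {F : PS N → ℂ} {F' : PS N →L[ℝ] ℂ} {x : PS N}
    (hF : HasFDerivAt F F' x)
    (hFqp : ∀ (u u' pu pu' : ℝ) (q p : Fin N → ℝ), F (u, q, pu, p) = F (u', q, pu', p)) :
    IsHorizontal F' := fun a b => by
  have hline : HasDerivAt (fun t : ℝ => x + t • ((a, 0, b, 0) : PS N)) (a, 0, b, 0) 0 := by
    simpa using ((hasDerivAt_id (0 : ℝ)).smul_const ((a, 0, b, 0) : PS N)).const_add x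
  have hderiv := hF.comp_hasDerivAt_of_eq (0 : ℝ) hline (by simp)
  have hconst : F ∘ (fun t : ℝ => x + t • ((a, 0, b, 0) : PS N)) = fun _ => F x := by
    funext t
    have hpoint : x + t • ((a, 0, b, 0) : PS N) =
        (x.1 + t * a, x.2.1, x.2.2.1 + t * b, x.2.2.2) := by
      ext <;> simp
    rw [Function.comp_apply, hpoint]
    exact hFqp _ _ _ _ _ _
  rw [hconst] at hderiv
  exact hderiv.unique (hasDerivAt_const _ _)

theorem pbracket_eq_poissonForm {F G : PS N → ℂ} {F' G' : PS N →L[ℝ] ℂ} {x : PS N}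
    (hF : HasFDerivAt F F' x) (hG : HasFDerivAt G G' x) :
    pbracket F G x = poissonForm F' G' := by
  have du {K : PS N → ℂ} {K' : PS N →L[ℝ] ℂ} (hK : HasFDerivAt K K' x) :
      pdu K x = K' (1, 0, 0, 0) :=
    (hK.comp_hasDerivAt x.1 ((hasDerivAt_id _).prodMk (hasDerivAt_const _ _))).deriv
  have dpu {K : PS N → ℂ} {K' : PS N →L[ℝ] ℂ} (hK : HasFDerivAt K K' x) :
      pdpu K x = K' (0, 0, 1, 0) :=
    (hK.comp_hasDerivAt x.2.2.1 ((hasDerivAt_const _ _).prodMk ((hasDerivAt_const _ _).prodMk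
      ((hasDerivAt_id _).prodMk (hasDerivAt_const _ _))))).deriv
  have dq {K : PS N → ℂ} {K' : PS N →L[ℝ] ℂ} (hK : HasFDerivAt K K' x) (i : Fin N) :
      pdq i K x = K' (0, Pi.single i 1, 0, 0) :=
    (hK.comp_hasDerivAt_of_eq (x.2.1 i) ((hasDerivAt_const _ _).prodMk
      ((hasDerivAt_update _ _ _).prodMk (hasDerivAt_const _ _))) (by simp)).deriv
  have dp {K : PS N → ℂ} {K' : PS N →L[ℝ] ℂ} (hK : HasFDerivAt K K' x) (i : Fin N) :
      pdp i K x = K' (0, 0, 0, Pi.single i 1) :=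
    (hK.comp_hasDerivAt_of_eq (x.2.2.2 i) ((hasDerivAt_const _ _).prodMk
      ((hasDerivAt_const _ _).prodMk ((hasDerivAt_const _ _).prodMk
        (hasDerivAt_update _ _ _)))) (by simp)).deriv
  simp only [pbracket, poissonForm, LinearMap.mk₂_apply, du hF, du hG, dpu hF, dpu hG, dq hF,
    dq hG, dp hF, dp hG]

end PoissonForm

section Eigenfunctions

variable {N : ℕ} {H F G : PS N → ℂ} {a b : ℂ} {x : PS N}

/-- `F` is differentiable at `x` and `{H, F} = a F` there: along the flow of `H`, the function `F`
has logarithmic derivative `a` at `x`. -/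
structure IsEigenAt (H F : PS N → ℂ) (a : ℂ) (x : PS N) : Prop where
  differentiableAt : DifferentiableAt ℝ F x
  pbracket_eq : pbracket H F x = a * F x

theorem IsEigenAt.mul (hH : DifferentiableAt ℝ H x) (hF : IsEigenAt H F a x)
    (hG : IsEigenAt H G b x) : IsEigenAt H (fun y => F y * G y) (a + b) x where
  differentiableAt := hF.differentiableAt.fun_mul hG.differentiableAt
  pbracket_eq := by
    have dF := hF.differentiableAt.hasFDerivAt
    have dG := hG.differentiableAt.hasFDerivAt
    have hFH := hF.pbracket_eq
    have hGH := hG.pbracket_eq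
    rw [pbracket_eq_poissonForm hH.hasFDerivAt dF] at hFH
    rw [pbracket_eq_poissonForm hH.hasFDerivAt dG] at hGH
    rw [pbracket_eq_poissonForm hH.hasFDerivAt (dF.fun_mul dG), map_add, map_smul, map_smul,
      hFH, hGH, smul_eq_mul, smul_eq_mul]
    ring

theorem isEigenAt_const (hH : DifferentiableAt ℝ H x) (r : ℂ) :
    IsEigenAt H (fun _ => r) 0 x where
  differentiableAt := differentiableAt_const r
  pbracket_eq := by
    rw [pbracket_eq_poissonForm hH.hasFDerivAt (hasFDerivAt_const r x), map_zero, zero_mul]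

theorem IsEigenAt.const_mul (hH : DifferentiableAt ℝ H x) (hF : IsEigenAt H F a x) (r : ℂ) :
    IsEigenAt H (fun y => r * F y) a x := by
  simpa only [zero_add] using (isEigenAt_const hH r).mul hH hF

theorem IsEigenAt.pow (hH : DifferentiableAt ℝ H x) (hF : IsEigenAt H F a x) (j : ℕ) :
    IsEigenAt H (fun y => F y ^ j) (j * a) x := by
  induction j with
  | zero => simpa using isEigenAt_const hH 1
  | succ j ih =>
    simpa only [pow_succ, Nat.cast_succ, add_mul, one_mul] using ih.mul hH hF

end Eigenfunctions

section Extension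

variable {N : ℕ} {γ : ℝ → ℂ} {γ' : ℂ} {M : PS N → ℂ} {M' : PS N →L[ℝ] ℂ} {x : PS N}

/-- The extended Hamiltonian `½p_u² + ½(γ² + κ)M² + ω²/(2γ²) - E`, with `κ = C/c` and
`E = (C/c)k²c₀` in the notation of the paper. -/
def extHamiltonian (γ : ℝ → ℂ) (M : PS N → ℂ) (κ ω E : ℂ) (y : PS N) : ℂ :=
  1 / 2 * (y.2.2.1 : ℂ) ^ 2 + 1 / 2 * (γ y.1 ^ 2 + κ) * M y ^ 2 + ω ^ 2 / (2 * γ y.1 ^ 2) - E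

/-- The factor `ω/γ + s p_u + σ γ M`, with `s = ±i` and `σ = ±1`, out of which both `A^±` and
`D^±` are built. -/
def ladderFactor (γ : ℝ → ℂ) (M : PS N → ℂ) (ω s σ : ℂ) (y : PS N) : ℂ :=
  ω / γ y.1 + s * y.2.2.1 + σ * (γ y.1 * M y)

theorem hasFDerivAt_comp_coord_u (hγ : HasDerivAt γ γ' x.1) :
    HasFDerivAt (fun y : PS N => γ y.1) (γ' • coordDu) x := by
  refine (hγ.hasFDerivAt.comp x hasFDerivAt_fst).congr_fderiv ?_
  ext <;> simp [coordDu]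

theorem hasFDerivAt_coord_pu : HasFDerivAt (fun y : PS N => (y.2.2.1 : ℂ)) coordDpu x :=
  coordDpu.hasFDerivAt

theorem hasFDerivAt_extHamiltonian (κ ω E : ℂ) (hγ : HasDerivAt γ γ' x.1) (hγ0 : γ x.1 ≠ 0)
    (hM : HasFDerivAt M M' x) :
    HasFDerivAt (extHamiltonian γ M κ ω E)
      ((γ' * (γ x.1 * M x ^ 2 - ω ^ 2 / γ x.1 ^ 3)) • coordDu + (x.2.2.1 : ℂ) • coordDpu
        + ((γ x.1 ^ 2 + κ) * M x) • M') x := by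
  have hcoupling : HasDerivAt (fun u => 1 / 2 * (γ u ^ 2 + κ)) (γ x.1 * γ') x.1 :=
    (((hγ.fun_pow 2).add_const κ).const_mul (1 / 2)).congr_deriv (by push_cast; ring)
  have hpotential : HasDerivAt (fun u => ω ^ 2 / (2 * γ u ^ 2)) (-(ω ^ 2 * γ' / γ x.1 ^ 3)) x.1 :=
    ((hasDerivAt_const _ _).fun_div ((hγ.fun_pow 2).const_mul 2) (by simpa)).congr_deriv
      (by push_cast; field_simp; ring)
  refine (((((hasFDerivAt_coord_pu (x := x)).pow 2).const_mul (1 / 2)).fun_add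
    ((hasFDerivAt_comp_coord_u hcoupling).fun_mul (hM.pow 2))).fun_add
    (hasFDerivAt_comp_coord_u hpotential)).sub_const E |>.congr_fderiv ?_
  module

theorem hasFDerivAt_ladderFactor (ω s σ : ℂ) (hγ : HasDerivAt γ γ' x.1) (hγ0 : γ x.1 ≠ 0)
    (hM : HasFDerivAt M M' x) :
    HasFDerivAt (ladderFactor γ M ω s σ)
      ((γ' * (σ * M x - ω / γ x.1 ^ 2)) • coordDu + s • coordDpu + (σ * γ x.1) • M') x := by
  have hcentrifugal : HasDerivAt (fun u => ω / γ u) (-(ω * γ' / γ x.1 ^ 2)) x.1 :=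
    ((hasDerivAt_const _ _).fun_div hγ hγ0).congr_deriv (by ring)
  refine (((hasFDerivAt_comp_coord_u hcentrifugal).fun_add
    (hasFDerivAt_coord_pu.const_mul s)).fun_add
    (((hasFDerivAt_comp_coord_u hγ).fun_mul hM).const_mul σ)).congr_fderiv ?_
  module

theorem isEigenAt_ladderFactor (κ ω E : ℂ) {s σ : ℂ} (hs : s ^ 2 = -1) (hσ : σ ^ 2 = 1)
    (hγ : HasDerivAt γ γ' x.1) (hγ0 : γ x.1 ≠ 0) (hM : HasFDerivAt M M' x)
    (hM' : IsHorizontal M') :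
    IsEigenAt (extHamiltonian γ M κ ω E) (ladderFactor γ M ω s σ)
      (s * γ' * (ω / γ x.1 ^ 2 - σ * M x)) x where
  differentiableAt := (hasFDerivAt_ladderFactor ω s σ hγ hγ0 hM).differentiableAt
  pbracket_eq := by
    rw [pbracket_eq_poissonForm (hasFDerivAt_extHamiltonian κ ω E hγ hγ0 hM)
      (hasFDerivAt_ladderFactor ω s σ hγ hγ0 hM),
      poissonForm_add_horizontal _ _ _ _ (hM'.smul _) (hM'.smul _), map_smul, map_smul,
      LinearMap.smul_apply, poissonForm_self, smul_zero, smul_zero, add_zero, ladderFactor]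
    field_simp
    linear_combination γ' * (x.2.2.1 * γ x.1 * (σ * M x * γ x.1 ^ 2 - ω)) * hs
      + γ' * s * M x ^ 2 * γ x.1 ^ 4 * hσ

theorem isEigenAt_extHamiltonian_of_base {G : PS N → ℂ} {b : ℂ} (κ ω E : ℂ)
    (hγ : HasDerivAt γ γ' x.1) (hγ0 : γ x.1 ≠ 0) (hM : HasFDerivAt M M' x)
    (hM' : IsHorizontal M') (hG : DifferentiableAt ℝ G x)
    (hGqp : ∀ (u u' pu pu' : ℝ) (q p : Fin N → ℝ), G (u, q, pu, p) = G (u', q, pu', p))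
    (hMG : pbracket M G x = b * G x) :
    IsEigenAt (extHamiltonian γ M κ ω E) G ((γ x.1 ^ 2 + κ) * M x * b) x where
  differentiableAt := hG
  pbracket_eq := by
    rw [pbracket_eq_poissonForm hM hG.hasFDerivAt] at hMG
    rw [pbracket_eq_poissonForm (hasFDerivAt_extHamiltonian κ ω E hγ hγ0 hM) hG.hasFDerivAt,
      poissonForm_add_horizontal_left _ _ (hM'.smul _)
        (isHorizontal_of_hasFDerivAt hG.hasFDerivAt hGqp),
      map_smul, LinearMap.smul_apply, hMG, smul_eq_mul]
    ring

theorem pbracket_of_sq_eq_affine {L G : PS N → ℂ} {μ ν : ℂ} (hL : DifferentiableAt ℝ L x)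
    (hM : DifferentiableAt ℝ M x) (hM0 : M x ≠ 0) (hG : DifferentiableAt ℝ G x)
    (hML : ∀ y, M y ^ 2 = 2 * μ * L y + ν) :
    pbracket M G x = μ / M x * pbracket L G x := by
  have hdiff : (2 * M x) • fderiv ℝ M x = (2 * μ) • fderiv ℝ L x := by
    have hsq := (hM.hasFDerivAt.pow 2).congr_of_eventuallyEq (.of_forall fun y => (hML y).symm)
    have haff := (hL.hasFDerivAt.const_mul (2 * μ)).add_const ν
    simpa using hsq.unique haff
  have hbracket := congrArg (fun α => poissonForm α (fderiv ℝ G x)) hdiff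
  simp only [map_smul, LinearMap.smul_apply, smul_eq_mul] at hbracket
  rw [pbracket_eq_poissonForm hM.hasFDerivAt hG.hasFDerivAt,
    pbracket_eq_poissonForm hL.hasFDerivAt hG.hasFDerivAt]
  field_simp
  linear_combination hbracket / 2

theorem pbracket_eq_of_ladder {L G : PS N → ℂ} {c c₀ k e : ℂ} (hL : DifferentiableAt ℝ L x)
    (hM : DifferentiableAt ℝ M x) (hM0 : M x ≠ 0) (hG : DifferentiableAt ℝ G x)
    (hML : ∀ y, M y ^ 2 = k ^ 2 * (2 * (c * L y + c₀)))
    (hladder : pbracket L G x = e / k * M x * G x) :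
    pbracket M G x = k * c * e * G x := by
  have hk0 : k ≠ 0 := by
    rintro rfl
    exact hM0 (by simpa using hML x)
  rw [pbracket_of_sq_eq_affine (μ := k ^ 2 * c) (ν := k ^ 2 * (2 * c₀)) hL hM hM0 hG
    fun y => by rw [hML]; ring, hladder]
  field_simp

theorem ladderD_eq_ladderFactor_mul (c C c₀ k : ℂ) {ω e : ℂ} (hω : ω ≠ 0) (he : e ^ 2 = -1)
    (y : PS N) :
    -(e / γ y.1) * y.2.2.1 + ω / γ y.1 ^ 2
        - extHamiltonian γ M (C / c) ω (C / c * k ^ 2 * c₀) y / ω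
        - C / (c * ω) * (c₀ * k ^ 2 - M y ^ 2 / 2)
      = (2 * ω)⁻¹ * (ladderFactor γ M ω (-e) (-1) y * ladderFactor γ M ω (-e) 1 y) := by
  simp only [extHamiltonian, ladderFactor]
  linear_combination (e * y.2.2.1 / γ y.1 - ω / γ y.1 ^ 2) * mul_inv_cancel₀ hω
    - y.2.2.1 ^ 2 / (2 * ω) * he

end Extension

theorem differentiable_ofReal_mul_sqrt {E : Type*} [NormedAddCommGroup E] [NormedSpace ℝ E]
    (k : ℝ) {f : E → ℝ} (hf : Differentiable ℝ f) (hf0 : ∀ y, f y ≠ 0) :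
    Differentiable ℝ (fun y => ((k * √(f y) : ℝ) : ℂ)) :=
  Complex.ofRealCLM.differentiable.comp ((hf.sqrt hf0).const_mul k)

theorem kuru_negro_factorized_integrals_general {N : ℕ} {c c₀ C ω k e : ℂ} (hc : c ≠ 0)
    (hω : ω ≠ 0) (he : e ^ 2 = -1) {m n : ℕ} (hk : n * k = m)
    {γ : ℝ → ℂ} {L M G H A D : PS N → ℂ} {x : PS N}
    (hγ : HasDerivAt γ (-(c * γ x.1 ^ 2 + C)) x.1) (hγ0 : γ x.1 ≠ 0)
    (hL : DifferentiableAt ℝ L x) (hM : DifferentiableAt ℝ M x) (hM0 : M x ≠ 0)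
    (hMqp : ∀ (u u' pu pu' : ℝ) (q p : Fin N → ℝ), M (u, q, pu, p) = M (u', q, pu', p))
    (hML : ∀ y, M y ^ 2 = k ^ 2 * (2 * (c * L y + c₀)))
    (hG : DifferentiableAt ℝ G x)
    (hGqp : ∀ (u u' pu pu' : ℝ) (q p : Fin N → ℝ), G (u, q, pu, p) = G (u', q, pu', p))
    (hladder : XL L G x = e / k * M x * G x)
    (hH : ∀ y, H y = 1 / 2 * (y.2.2.1 : ℂ) ^ 2 + 1 / 2 * (γ y.1 ^ 2 + C / c) * M y ^ 2
      + ω ^ 2 / (2 * γ y.1 ^ 2) - C / c * k ^ 2 * c₀)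
    (hA : ∀ y, A y = e / (√2 : ℝ) * y.2.2.1 + ω / ((√2 : ℝ) * γ y.1) - M y / (√2 : ℝ) * γ y.1)
    (hD : ∀ y, D y = -(e / γ y.1) * y.2.2.1 + ω / γ y.1 ^ 2 - H y / ω
      - C / (c * ω) * (c₀ * k ^ 2 - M y ^ 2 / 2)) :
    pbracket H (fun y => G y ^ (2 * n) * A y ^ (2 * m) * D y ^ m) x = 0 := by
  have hHext : H = extHamiltonian γ M (C / c) ω (C / c * k ^ 2 * c₀) := funext hH
  have hA_factor : A = fun y => (√2 : ℂ)⁻¹ * ladderFactor γ M ω e (-1) y := by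
    funext y
    rw [hA, ladderFactor]
    ring
  have hD_factor : D = fun y =>
      (2 * ω)⁻¹ * (ladderFactor γ M ω (-e) (-1) y * ladderFactor γ M ω (-e) 1 y) := by
    funext y
    rw [hD, hHext, ladderD_eq_ladderFactor_mul c C c₀ k hω he]
  have hHd : DifferentiableAt ℝ H x :=
    hHext ▸ (hasFDerivAt_extHamiltonian _ _ _ hγ hγ0 hM.hasFDerivAt).differentiableAt
  have hM' := isHorizontal_of_hasFDerivAt hM.hasFDerivAt hMqp
  have hGeigen : IsEigenAt H G ((γ x.1 ^ 2 + C / c) * M x * (k * c * e)) x :=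
    hHext ▸ isEigenAt_extHamiltonian_of_base _ _ _ hγ hγ0 hM.hasFDerivAt hM' hG hGqp
      (pbracket_eq_of_ladder hL hM hM0 hG hML hladder)
  have hfactor {s σ : ℂ} (hs : s ^ 2 = -1) (hσ : σ ^ 2 = 1) :
      IsEigenAt H (ladderFactor γ M ω s σ)
        (s * -(c * γ x.1 ^ 2 + C) * (ω / γ x.1 ^ 2 - σ * M x)) x :=
    hHext ▸ isEigenAt_ladderFactor _ _ _ hs hσ hγ hγ0 hM.hasFDerivAt hM'
  have hAeigen := hA_factor ▸ (hfactor he (by norm_num)).const_mul hHd _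
  have he' : (-e) ^ 2 = -1 := by rwa [neg_sq]
  have hDeigen := hD_factor ▸
    ((hfactor he' (by norm_num)).mul hHd (hfactor he' (by norm_num))).const_mul hHd _
  have hX := ((hGeigen.pow hHd (2 * n)).mul hHd (hAeigen.pow hHd (2 * m))).mul hHd
    (hDeigen.pow hHd m)
  rw [hX.pbracket_eq]
  convert zero_mul _
  push_cast
  rw [← hk]
  field_simp
  ring

theorem pbracket_factorizedIntegral_ofReal {N : ℕ} {c c₀ C ω k : ℝ} {e : ℂ} (hc : c ≠ 0)
    (hω : ω ≠ 0) (he : e ^ 2 = -1) {m n : ℕ} (hk0 : k ≠ 0) (hk : n * k = m)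
    {γ : ℝ → ℝ} {L M : PS N → ℝ} {G H A D : PS N → ℂ} {x : PS N}
    (hγ : HasDerivAt γ (-(c * γ x.1 ^ 2 + C)) x.1) (hγ0 : γ x.1 ≠ 0)
    (hL : Differentiable ℝ L)
    (hLqp : ∀ (u u' pu pu' : ℝ) (q p : Fin N → ℝ), L (u, q, pu, p) = L (u', q, pu', p))
    (hLpos : ∀ y, 0 < 2 * (c * L y + c₀)) (hM : ∀ y, M y = k * √(2 * (c * L y + c₀)))
    (hG : DifferentiableAt ℝ G x)
    (hGqp : ∀ (u u' pu pu' : ℝ) (q p : Fin N → ℝ), G (u, q, pu, p) = G (u', q, pu', p))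
    (hladder : XL (fun y => (L y : ℂ)) G x = e / k * M x * G x)
    (hH : ∀ y, H y = ((1 / 2 * y.2.2.1 ^ 2 + 1 / 2 * (γ y.1 ^ 2 + C / c) * M y ^ 2
      + ω ^ 2 / (2 * γ y.1 ^ 2) - C / c * k ^ 2 * c₀ : ℝ) : ℂ))
    (hA : ∀ y, A y = e / (√2 : ℝ) * y.2.2.1 + ω / ((√2 : ℝ) * γ y.1) - M y / (√2 : ℝ) * γ y.1)
    (hD : ∀ y, D y = -(e / γ y.1) * y.2.2.1 + ω / (γ y.1 : ℂ) ^ 2 - H y / ω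
      - C / (c * ω) * (c₀ * k ^ 2 - (M y : ℂ) ^ 2 / 2)) :
    pbracket H (fun y => G y ^ (2 * n) * A y ^ (2 * m) * D y ^ m) x = 0 := by
  have hMd : Differentiable ℝ fun y => (M y : ℂ) := by
    simpa only [hM] using differentiable_ofReal_mul_sqrt k
      (((hL.const_mul c).add_const c₀).const_mul 2) fun y => (hLpos y).ne'
  have hM0 : M x ≠ 0 := by
    rw [hM]
    exact mul_ne_zero hk0 (Real.sqrt_pos.2 (hLpos x)).ne'
  have hMsq (y : PS N) : M y ^ 2 = k ^ 2 * (2 * (c * L y + c₀)) := by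
    rw [hM, mul_pow, Real.sq_sqrt (hLpos y).le]
  exact kuru_negro_factorized_integrals_general (γ := fun u => (γ u : ℂ))
    (L := fun y => (L y : ℂ)) (M := fun y => (M y : ℂ)) (mod_cast hc) (mod_cast hω) he
    (mod_cast congrArg ((↑) : ℝ → ℂ) hk) (mod_cast hγ.ofReal_comp) (mod_cast hγ0)
    (Complex.ofRealCLM.differentiableAt.comp x (hL x)) (hMd x) (mod_cast hM0)
    (fun u u' pu pu' q p => by rw [hM, hM, hLqp u u' pu pu'])
    (fun y => mod_cast congrArg ((↑) : ℝ → ℂ) (hMsq y)) hG hGqp hladder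
    (fun y => by rw [hH]; push_cast; rfl) hA hD

/-- Kuru–Negro style factorized first integrals
`X^± = (G^±)^{2n}(A^∓)^{2m}(D^±)^m` of the extension
`H = ½p_u² + ½(γ² + C/c)M² + ω²/(2γ²) - (C/c)k²c₀`. -/
theorem kuru_negro_factorized_integrals
    (N : ℕ) (hN : 1 ≤ N) (c c₀ C ω : ℝ) (hc : c ≠ 0) (hω : ω ≠ 0)
    (m n : ℕ) (hm : 0 < m) (hn : 0 < n) (k : ℝ) (hk : k = (m : ℝ) / (n : ℝ))
    (L : PS N → ℝ) (hLsmooth : ContDiff ℝ (⊤ : ℕ∞) L)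
    (hLqp : ∀ (u u' pu pu' : ℝ) (q p : Fin N → ℝ),
      L (u, q, pu, p) = L (u', q, pu', p))
    (hLpos : ∀ x : PS N, 0 < 2 * (c * L x + c₀))
    (M : PS N → ℝ) (hM : ∀ x : PS N, M x = k * Real.sqrt (2 * (c * L x + c₀)))
    (I : Set ℝ) (hIopen : IsOpen I) (hIconn : I.OrdConnected) (hInonempty : I.Nonempty)
    (γ : ℝ → ℝ) (hγ : ContDiff ℝ (⊤ : ℕ∞) γ) (hγne : ∀ u ∈ I, γ u ≠ 0)
    (hode : ∀ u ∈ I, deriv γ u + c * γ u ^ 2 + C = 0)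
    (Gp Gm : PS N → ℂ) (hGpsmooth : ContDiff ℝ (⊤ : ℕ∞) Gp) (hGmsmooth : ContDiff ℝ (⊤ : ℕ∞) Gm)
    (hGpqp : ∀ (u u' pu pu' : ℝ) (q p : Fin N → ℝ),
      Gp (u, q, pu, p) = Gp (u', q, pu', p))
    (hGmqp : ∀ (u u' pu pu' : ℝ) (q p : Fin N → ℝ),
      Gm (u, q, pu, p) = Gm (u', q, pu', p))
    (hGpladder : ∀ x : PS N,
      XL (fun y => (L y : ℂ)) Gp x = (Complex.I / (k : ℂ)) * (M x : ℂ) * Gp x)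
    (hGmladder : ∀ x : PS N,
      XL (fun y => (L y : ℂ)) Gm x = -((Complex.I / (k : ℂ)) * (M x : ℂ)) * Gm x)
    (H : PS N → ℂ)
    (hH : ∀ x : PS N, H x =
      (((1 / 2) * x.2.2.1 ^ 2 + (1 / 2) * (γ x.1 ^ 2 + C / c) * M x ^ 2
        + ω ^ 2 / (2 * γ x.1 ^ 2) - (C / c) * k ^ 2 * c₀ : ℝ) : ℂ))
    (Ap Am : PS N → ℂ)
    (hAp : ∀ x : PS N, Ap x = -(Complex.I / (Real.sqrt 2 : ℂ)) * (x.2.2.1 : ℂ)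
      + (ω : ℂ) / ((Real.sqrt 2 : ℂ) * (γ x.1 : ℂ)) - ((M x : ℂ) / (Real.sqrt 2 : ℂ)) * (γ x.1 : ℂ))
    (hAm : ∀ x : PS N, Am x = (Complex.I / (Real.sqrt 2 : ℂ)) * (x.2.2.1 : ℂ)
      + (ω : ℂ) / ((Real.sqrt 2 : ℂ) * (γ x.1 : ℂ)) - ((M x : ℂ) / (Real.sqrt 2 : ℂ)) * (γ x.1 : ℂ))
    (Dp Dm : PS N → ℂ)
    (hDp : ∀ x : PS N, Dp x = -(Complex.I / (γ x.1 : ℂ)) * (x.2.2.1 : ℂ)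
      + (ω : ℂ) / (γ x.1 : ℂ) ^ 2 - H x / (ω : ℂ)
      - ((C : ℂ) / ((c : ℂ) * (ω : ℂ))) * ((c₀ : ℂ) * (k : ℂ) ^ 2 - (M x : ℂ) ^ 2 / 2))
    (hDm : ∀ x : PS N, Dm x = (Complex.I / (γ x.1 : ℂ)) * (x.2.2.1 : ℂ)
      + (ω : ℂ) / (γ x.1 : ℂ) ^ 2 - H x / (ω : ℂ)
      - ((C : ℂ) / ((c : ℂ) * (ω : ℂ))) * ((c₀ : ℂ) * (k : ℂ) ^ 2 - (M x : ℂ) ^ 2 / 2)) :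
    (∀ x : PS N, x.1 ∈ I →
      pbracket H (fun y => Gp y ^ (2 * n) * Am y ^ (2 * m) * Dp y ^ m) x = 0) ∧
    (∀ x : PS N, x.1 ∈ I →
      pbracket H (fun y => Gm y ^ (2 * n) * Ap y ^ (2 * m) * Dm y ^ m) x = 0) := by
  have hk0 : k ≠ 0 := by rw [hk]; positivity
  have hnk : n * k = m := by rw [hk]; field_simp
  have hLd := hLsmooth.differentiable (by simp)
  have hγ' (u : ℝ) (hu : u ∈ I) : HasDerivAt γ (-(c * γ u ^ 2 + C)) u :=
    (hγ.differentiable (by simp) u).hasDerivAt.congr_deriv (by linear_combination hode u hu)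
  constructor <;> intro x hx
  · exact pbracket_factorizedIntegral_ofReal hc hω Complex.I_sq hk0 hnk (hγ' _ hx) (hγne _ hx)
      hLd hLqp hLpos hM (hGpsmooth.differentiable (by simp) x) hGpqp (hGpladder x) hH hAm hDp
  · exact pbracket_factorizedIntegral_ofReal hc hω (e := -Complex.I) (by simp) hk0 hnk
      (hγ' _ hx) (hγne _ hx) hLd hLqp hLpos hM (hGmsmooth.differentiable (by simp) x) hGmqp
      (by rw [hGmladder]; ring) hH (fun y => by rw [hAp]; ring) (fun y => by rw [hDm]; ring)
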